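/- arXiv:1601.06501 — 2 statements merged into one kernel-verified Lean document; each statement's English description precedes it below -/
import Mathlib

section
/- Let b be a prime and n ∈ ℕ. With S_1 := ∑_{k=0}^{∞} b^{−μ_2(k)} and S_{2,n} := ∑_{k=0}^{b^n−1} b^{−μ_2(k)}, one has S_1 − S_{2,n} ≤ 2n / b^n. -/
/-!
Split `[0, b ^ (m + 1))` by the digit `q` in position `m`: for `0 < q < b` and `r < b ^ m` the
number `q * b ^ m + r` has the nonzero digits of `r` and one more on top of them, so
`μ_{α+1}(q * b ^ m + r) = m + 1 + μ_α(r)`. For `F_α(m) = ∑_{k < b ^ m} b ^ (-μ_α(k))` this gives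
`F_{α+1}(m + 1) = F_{α+1}(m) + (b - 1) / b ^ (m + 1) * F_α(m)` with `F_0(m) = b ^ m`. Solving the
recurrence for `α = 1`, then for `α = 2`, yields
`F_2(m) = 2 + 1 / b - (m + 1 - (m - 1) / b) / b ^ m`. Hence the series sums to `2 + 1 / b`, and the
tail beyond `b ^ n` is exactly `(n + 1 - (n - 1) / b) / b ^ n`, which is at most `2 * n / b ^ n` for
`n ≥ 1`.
-/

open scoped BigOperators

/-- The `i`-th digit (starting from `i = 0`) of the `b`-adic expansion of `k`. -/
def bdigit (b k i : ℕ) : ℕ := k / b ^ i % b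

/-- The set of indices of nonzero `b`-adic digits of `k`. -/
def bsupp (b k : ℕ) : Finset ℕ := (Finset.range (k + 1)).filter fun i => bdigit b k i ≠ 0

/-- The Hamming metric `κ(k)`: the number of nonzero `b`-adic digits of `k`. -/
def hamming (b k : ℕ) : ℕ := (bsupp b k).card

/-- The Dick metric `μ_α(k)`: the sum of the `min(v, α)` largest exponents-plus-one
`a_1 > a_2 > ⋯` of the nonzero `b`-adic digits of `k`. -/
def dick (b α k : ℕ) : ℕ := ((((bsupp b k).sort (· ≤ ·)).reverse.take α).map (· + 1)).sum

/-- Digitwise addition `k ⊕ l` modulo `b` of the `b`-adic digits. -/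
def dadd (b k l : ℕ) : ℕ :=
  ∑ i ∈ Finset.range (k + l + 1), (bdigit b k i + bdigit b l i) % b * b ^ i

/-- Digitwise subtraction `k ⊖ l` modulo `b` of the `b`-adic digits. -/
def dsub (b k l : ℕ) : ℕ :=
  ∑ i ∈ Finset.range (k + l + 1), (bdigit b k i + (b - bdigit b l i)) % b * b ^ i

/-- Hamming metric of a vector: sum over coordinates. -/
def hammingVec (b : ℕ) {s : ℕ} (k : Fin s → ℕ) : ℕ := ∑ j, hamming b (k j)

/-- Dick metric of a vector: sum over coordinates. -/
def dickVec (b α : ℕ) {s : ℕ} (k : Fin s → ℕ) : ℕ := ∑ j, dick b α (k j)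

theorem sum_range_mul {M : Type*} [AddCommMonoid M] (f : ℕ → M) (m n : ℕ) :
    ∑ k ∈ Finset.range (m * n), f k =
      ∑ q ∈ Finset.range m, ∑ r ∈ Finset.range n, f (q * n + r) := by
  induction m with
  | zero => simp
  | succ m ih => rw [add_one_mul, Finset.sum_range_add, Finset.sum_range_succ, ih]

section Digits

variable {b k m i q r : ℕ}

theorem bdigit_eq_zero_of_lt_pow (hb : 0 < b) (hk : k < b ^ m) (hi : m ≤ i) :
    bdigit b k i = 0 := by
  rw [bdigit, Nat.div_eq_of_lt (hk.trans_le (Nat.pow_le_pow_right hb hi)), Nat.zero_mod]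

theorem bdigit_mul_pow_add_of_lt (hi : i < m) : bdigit b (q * b ^ m + r) i = bdigit b r i := by
  have hdvd : b ^ (i + 1) ∣ q * b ^ m := (pow_dvd_pow b hi).mul_left q
  simp only [bdigit, ← Nat.mod_mul_right_div_self, ← pow_succ]
  rw [Nat.add_mod, Nat.mod_eq_zero_of_dvd hdvd, zero_add, Nat.mod_mod]

theorem bdigit_mul_pow_add_self (hq : q < b) (hr : r < b ^ m) :
    bdigit b (q * b ^ m + r) m = q := by
  rw [bdigit, mul_comm, Nat.mul_add_div (by lia), Nat.div_eq_of_lt hr, add_zero,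
    Nat.mod_eq_of_lt hq]

theorem mem_bsupp_iff (hb : 1 < b) : i ∈ bsupp b k ↔ bdigit b k i ≠ 0 := by
  rw [bsupp, Finset.mem_filter, Finset.mem_range, and_iff_right_iff_imp]
  contrapose!
  intro hki
  exact bdigit_eq_zero_of_lt_pow (by lia) (Nat.lt_pow_self hb) (by lia)

theorem lt_of_mem_bsupp (hb : 0 < b) (hk : k < b ^ m) (hi : i ∈ bsupp b k) : i < m := by
  by_contra! hmi
  exact (Finset.mem_filter.1 hi).2 (bdigit_eq_zero_of_lt_pow hb hk hmi)

theorem bsupp_mul_pow_add (hq : 0 < q) (hqb : q < b) (hr : r < b ^ m) :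
    bsupp b (q * b ^ m + r) = insert m (bsupp b r) := by
  have hb : 1 < b := by lia
  ext i
  rw [Finset.mem_insert, mem_bsupp_iff hb, mem_bsupp_iff hb]
  rcases lt_trichotomy i m with him | rfl | hmi
  · simp only [bdigit_mul_pow_add_of_lt him, him.ne, false_or]
  · simp only [bdigit_mul_pow_add_self hqb hr, hq.ne', ne_eq, not_false_eq_true, true_or]
  · have hlt : q * b ^ m + r < b ^ (m + 1) :=
      calc
        q * b ^ m + r < (q + 1) * b ^ m := by rw [add_one_mul]; gcongr
        _ ≤ b ^ (m + 1) := by rw [pow_succ']; gcongr; exact hqb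
    simp only [bdigit_eq_zero_of_lt_pow hb.le hlt hmi, bdigit_eq_zero_of_lt_pow hb.le hr hmi.le,
      hmi.ne', ne_eq, not_true_eq_false, or_self]

end Digits

section DickMetric

theorem reverse_sort_le_eq_sort_ge {ι : Type*} [LinearOrder ι] (s : Finset ι) :
    (s.sort (· ≤ ·)).reverse = s.sort (· ≥ ·) :=
  (s.sortedGT_sort.eq_reverse_of_mem_iff_of_sortedLT (by simp) s.sortedLT_sort).symm

theorem dick_eq_sum_take_sort_ge (b α k : ℕ) :
    dick b α k = ((((bsupp b k).sort (· ≥ ·)).take α).map (· + 1)).sum := by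
  rw [dick, reverse_sort_le_eq_sort_ge]

theorem dick_zero_right (b α : ℕ) : dick b α 0 = 0 := by
  simp [dick, bsupp, bdigit]

theorem dick_mul_pow_add {b m q r : ℕ} (α : ℕ) (hq : 0 < q) (hqb : q < b) (hr : r < b ^ m) :
    dick b (α + 1) (q * b ^ m + r) = m + 1 + dick b α r := by
  have hlt : ∀ i ∈ bsupp b r, i < m := fun i => lt_of_mem_bsupp (hq.trans hqb) hr
  rw [dick_eq_sum_take_sort_ge, dick_eq_sum_take_sort_ge, bsupp_mul_pow_add hq hqb hr,
    Finset.sort_insert _ (fun i hi => (hlt i hi).le) fun hm => (hlt m hm).false,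
    List.take_succ_cons, List.map_cons, List.sum_cons]

end DickMetric

section DickSum

/-- The partial sum `F_α(m) = ∑_{k < b ^ m} b ^ (-μ_α(k))` over the numbers with at most `m` digits
in base `b`; the `S_{2,n}` of the theorem is `dickSum b 2 n`. -/
noncomputable def dickSum (b α m : ℕ) : ℝ :=
  ∑ k ∈ Finset.range (b ^ m), (b : ℝ) ^ (-(dick b α k : ℝ))

variable {b : ℕ}

theorem dickSum_zero_left (b m : ℕ) : dickSum b 0 m = (b : ℝ) ^ m := by
  simp [dickSum, dick]

theorem dickSum_zero_right (b α : ℕ) : dickSum b α 0 = 1 := by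
  simp [dickSum, dick_zero_right]

theorem sum_rpow_neg_dick_mul_pow_add {q : ℕ} (α m : ℕ) (hq : 0 < q) (hqb : q < b) :
    ∑ r ∈ Finset.range (b ^ m), (b : ℝ) ^ (-(dick b (α + 1) (q * b ^ m + r) : ℝ)) =
      dickSum b α m / (b : ℝ) ^ (m + 1) := by
  have hb : (0 : ℝ) < b := by exact_mod_cast hq.trans hqb
  rw [dickSum, Finset.sum_div]
  refine Finset.sum_congr rfl fun r hr => ?_
  rw [dick_mul_pow_add α hq hqb (Finset.mem_range.1 hr), add_comm, Nat.cast_add, neg_add,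
    ← sub_eq_add_neg, Real.rpow_sub_natCast hb.ne']

theorem dickSum_succ (hb : 0 < b) (α m : ℕ) :
    dickSum b (α + 1) (m + 1) =
      dickSum b (α + 1) m + ((b : ℝ) - 1) / (b : ℝ) ^ (m + 1) * dickSum b α m := by
  obtain ⟨c, rfl⟩ := Nat.exists_eq_add_one.2 hb
  have leading (q : ℕ) (hq : q ∈ Finset.range c) :
      ∑ r ∈ Finset.range ((c + 1) ^ m),
          ((c + 1 : ℕ) : ℝ) ^ (-(dick (c + 1) (α + 1) ((q + 1) * (c + 1) ^ m + r) : ℝ)) =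
        dickSum (c + 1) α m / ((c + 1 : ℕ) : ℝ) ^ (m + 1) :=
    sum_rpow_neg_dick_mul_pow_add α m q.succ_pos (Nat.succ_lt_succ (Finset.mem_range.1 hq))
  rw [dickSum, pow_succ', sum_range_mul, Finset.sum_range_succ', Finset.sum_congr rfl leading,
    Finset.sum_const, Finset.card_range, nsmul_eq_mul]
  simp only [zero_mul, zero_add]
  rw [← dickSum]
  push_cast
  ring

theorem dickSum_one (hb : 0 < b) (m : ℕ) :
    dickSum b 1 m = 1 + m * (((b : ℝ) - 1) / b) := by
  induction m with
  | zero => simp [dickSum_zero_right]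
  | succ m ih =>
    rw [dickSum_succ hb 0 m, ih, dickSum_zero_left]
    push_cast
    field_simp
    ring

theorem dickSum_two (hb : 0 < b) (m : ℕ) :
    dickSum b 2 m = 2 + 1 / b - (m + 1 - (m - 1) / b) / (b : ℝ) ^ m := by
  induction m with
  | zero => rw [dickSum_zero_right]; push_cast; ring
  | succ m ih =>
    rw [dickSum_succ hb 1 m, ih, dickSum_one hb]
    push_cast
    field_simp
    ring

end DickSum

section Series

open Filter Topology

variable {b : ℕ}

theorem hasSum_of_tendsto_sum_range_pow {f : ℕ → ℝ} {a : ℝ} (hf : ∀ k, 0 ≤ f k) (hb : 1 < b)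
    (h : Tendsto (fun m => ∑ k ∈ Finset.range (b ^ m), f k) atTop (𝓝 a)) : HasSum f a := by
  have hmono : Monotone fun n => ∑ k ∈ Finset.range n, f k := fun _ _ hmn =>
    Finset.sum_le_sum_of_subset_of_nonneg (Finset.range_mono hmn) fun k _ _ => hf k
  exact (hasSum_iff_tendsto_nat_of_nonneg hf a).2 <|
    (tendsto_iff_tendsto_subseq_of_monotone hmono (tendsto_pow_atTop_atTop_of_one_lt hb)).2 h

theorem tendsto_dickSum_two (hb : 1 < b) :
    Tendsto (dickSum b 2) atTop (𝓝 (2 + 1 / (b : ℝ))) := by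
  have hb' : (1 : ℝ) < b := by exact_mod_cast hb
  have hconst := (tendsto_pow_const_div_const_pow_of_one_lt 0 hb').const_mul (1 + 1 / (b : ℝ))
  have hlinear := (tendsto_pow_const_div_const_pow_of_one_lt 1 hb').const_mul (1 - 1 / (b : ℝ))
  convert (hlinear.add hconst).const_sub (2 + 1 / (b : ℝ)) using 2 with m
  · rw [dickSum_two hb.le]
    ring
  · ring

theorem hasSum_rpow_neg_dick_two (hb : 1 < b) :
    HasSum (fun k => (b : ℝ) ^ (-(dick b 2 k : ℝ))) (2 + 1 / b) :=
  hasSum_of_tendsto_sum_range_pow (fun _ => by positivity) hb (tendsto_dickSum_two hb)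

end Series

theorem tail_sum_bound_two_general (b n : ℕ) (hb : 1 < b) (hn : 0 < n) :
    (∑' k : ℕ, (b : ℝ) ^ (-(dick b 2 k : ℝ))) -
      ∑ k ∈ Finset.range (b ^ n), (b : ℝ) ^ (-(dick b 2 k : ℝ)) ≤
    2 * n / (b : ℝ) ^ n := by
  have hn' : (1 : ℝ) ≤ n := by exact_mod_cast hn
  have hcorr : 0 ≤ ((n : ℝ) - 1) / b := div_nonneg (sub_nonneg.2 hn') b.cast_nonneg
  rw [(hasSum_rpow_neg_dick_two hb).tsum_eq, ← dickSum, dickSum_two hb.le, sub_sub_cancel]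
  gcongr
  linarith

/-- For a prime `b` and `n ∈ ℕ`, with `S_1 = ∑_{k≥0} b^{-μ_2(k)}` and
`S_{2,n} = ∑_{k<b^n} b^{-μ_2(k)}`, one has `S_1 - S_{2,n} ≤ 2n/b^n`. -/
theorem tail_sum_bound_two (b n : ℕ) (hb : b.Prime) (hn : 0 < n) :
    (∑' k : ℕ, (b : ℝ) ^ (-(dick b 2 k : ℝ))) -
      ∑ k ∈ Finset.range (b ^ n), (b : ℝ) ^ (-(dick b 2 k : ℝ)) ≤
    2 * n / (b : ℝ) ^ n :=
  tail_sum_bound_two_general b n hb.one_lt hn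
end

section
/- Let b ≥ 2 be an integer, α, v, n ∈ ℕ with 2 ≤ α ≤ v. Then ∑ b^{−(a_1 + ... + a_α)}, where the sum ranges over all integer tuples with a_1 > a_2 > ... > a_v > 0 and a_1 > n, is at most (1/(b^n (b−1))) · (∏_{i=1}^{α−1} 1/(b^i − 1)) · (1/(b^{α−1} − 1))^{v−α}. -/
open scoped BigOperators

/-!
For weights `z i`, subtracting the smallest entry `m` of a decreasing tuple of length `w + 1` from
the others leaves a decreasing tuple of length `w`, and the weight `∏ z i ^ a i` acquires the factor
`(z 0 ⋯ z w) ^ m`. Induction on the length therefore turns the sum of the weights over all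
decreasing tuples of positive integers into a product of geometric series whose ratios are the
partial products `z 0 ⋯ z j`. If the largest entry has to exceed `n`, forgetting that it also
exceeds the second one splits off the geometric series `∑_{k > n} z 0 ^ k` at the cost of an
inequality. The weights `b⁻¹, …, b⁻¹, 1, …, 1`, with `α` entries `b⁻¹`, pick out the `α` largest
entries: without the leading one, their partial products are `b⁻¹ ^ min (j + 1) (α - 1)`.
-/

open Finset

lemma hasSum_mul_of_nonneg {ι κ : Type*} {f : ι → ℝ} {g : κ → ℝ} {s t : ℝ} (hf : HasSum f s)
    (hg : HasSum g t) (hf_nonneg : ∀ i, 0 ≤ f i) (hg_nonneg : ∀ k, 0 ≤ g k) :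
    HasSum (fun p : ι × κ => f p.1 * g p.2) (s * t) :=
  hf.mul hg (hf.summable.mul_of_nonneg hg.summable hf_nonneg hg_nonneg)

lemma hasSum_pow_Ioi {K : Type*} [NormedField K] {r : K} (hr : ‖r‖ < 1) (n : ℕ) :
    HasSum (fun k : Set.Ioi n => r ^ (k : ℕ)) (r ^ (n + 1) / (1 - r)) := by
  have hrange : Set.range (fun k => n + 1 + k) = Set.Ioi n := by
    ext k
    simpa [eq_comm, Nat.succ_le_iff] using! (le_iff_exists_add (a := n + 1) (b := k)).symm
  rw [← hrange, (add_right_injective (n + 1)).hasSum_range_iff (f := fun k => r ^ k)]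
  simpa only [Function.comp_def, pow_add, div_eq_mul_inv] using
    (hasSum_geometric_of_norm_lt_one hr).mul_left (r ^ (n + 1))

/-- Strictly decreasing tuples of `v` positive integers, the largest entry having index `0`. -/
abbrev DecreasingTuple (v : ℕ) : Type := {a : Fin v → ℕ // StrictAnti a ∧ ∀ i, 0 < a i}

namespace DecreasingTuple

/-- The decomposition of a decreasing tuple into its last, smallest, entry and the tuple of
differences between the other entries and the last one. -/
def subLastEquiv (w : ℕ) : DecreasingTuple (w + 1) ≃ Set.Ioi 0 × DecreasingTuple w where
  toFun a :=
    (⟨a.1 (Fin.last w), a.2.2 _⟩, ⟨fun i => a.1 i.castSucc - a.1 (Fin.last w),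
      fun i j hij => Nat.sub_lt_sub_right (a.2.1.antitone (Fin.le_last _)) (a.2.1 hij),
      fun i => Nat.sub_pos_of_lt (a.2.1 i.castSucc_lt_last)⟩)
  invFun p :=
    ⟨Fin.snoc (fun i => p.2.1 i + p.1) p.1, by
      refine ⟨fun i j hij => ?_, fun i => ?_⟩
      · obtain ⟨i, rfl⟩ := Fin.exists_castSucc_eq.2 (Fin.ne_last_of_lt hij)
        cases j using Fin.lastCases with
        | last => simpa using p.2.2.2 i
        | cast j => simpa using p.2.2.1 (Fin.castSucc_lt_castSucc_iff.1 hij)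
      · cases i using Fin.lastCases with
        | last => simpa only [Fin.snoc_last] using! p.1.2
        | cast i => simpa using Or.inl (p.2.2.2 i)⟩
  left_inv a := by
    ext i
    cases i using Fin.lastCases with
    | last => simp
    | cast i => simpa using Nat.sub_add_cancel (a.2.1.antitone (Fin.le_last _))
  right_inv p := by ext <;> simp

lemma prod_pow_subLastEquiv_symm {M : Type*} [CommMonoid M] (z : ℕ → M) {w : ℕ}
    (p : Set.Ioi 0 × DecreasingTuple w) :
    ∏ i : Fin (w + 1), z i ^ ((subLastEquiv w).symm p).1 i =
      (∏ i ∈ range (w + 1), z i) ^ (p.1 : ℕ) * ∏ i : Fin w, z i ^ p.2.1 i := by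
  simp only [subLastEquiv, Equiv.coe_fn_symm_mk, Fin.prod_univ_castSucc, Fin.snoc_castSucc,
    Fin.snoc_last, Fin.val_castSucc, Fin.val_last, pow_add, prod_mul_distrib, prod_range_succ,
    mul_pow, prod_pow, Finset.prod_range]
  ac_rfl

theorem hasSum_prod_pow {z : ℕ → ℝ} (hz : ∀ i, 0 ≤ z i) (w : ℕ)
    (hlt : ∀ j < w, ∏ i ∈ range (j + 1), z i < 1) :
    HasSum (fun a : DecreasingTuple w => ∏ i : Fin w, z i ^ a.1 i)
      (∏ j ∈ range w, (∏ i ∈ range (j + 1), z i) / (1 - ∏ i ∈ range (j + 1), z i)) := by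
  induction w with
  | zero =>
    have : Unique (DecreasingTuple 0) :=
      { default := ⟨Fin.elim0, fun i => i.elim0, fun i => i.elim0⟩
        uniq := fun a => Subtype.ext (Subsingleton.elim _ _) }
    simp
  | succ w ih =>
    have hprod : 0 ≤ ∏ i ∈ range (w + 1), z i := prod_nonneg fun i _ => hz i
    have hlast := hasSum_pow_Ioi ((Real.norm_of_nonneg hprod).trans_lt (hlt w w.lt_succ_self)) 0
    have hrest := ih fun j hj => hlt j (hj.trans w.lt_succ_self)
    have hpair := hasSum_mul_of_nonneg hlast hrest (fun _ => pow_nonneg hprod _)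
      fun _ => prod_nonneg fun i _ => pow_nonneg (hz i) _
    rw [← (subLastEquiv w).symm.hasSum_iff, prod_range_succ, mul_comm]
    simpa only [Function.comp_def, prod_pow_subLastEquiv_symm, zero_add, pow_one] using hpair

/-- Splitting off the leading entry of a decreasing tuple whose leading entry exceeds `n`. This
forgets that the leading entry exceeds the second one. -/
def headTail {w n : ℕ} (a : {a : Fin (w + 1) → ℕ // StrictAnti a ∧ (∀ i, 0 < a i) ∧ n < a 0}) :
    Set.Ioi n × DecreasingTuple w :=
  (⟨a.1 0, a.2.2.2⟩,
    ⟨Fin.tail a.1, a.2.1.comp_strictMono Fin.strictMono_succ, fun i => a.2.2.1 i.succ⟩)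

lemma headTail_injective {w n : ℕ} : Function.Injective (headTail (w := w) (n := n)) := by
  intro a a' h
  have hhead : a.1 0 = a'.1 0 := congrArg (fun p => (p.1 : ℕ)) h
  have htail : Fin.tail a.1 = Fin.tail a'.1 := congrArg (fun p => p.2.1) h
  rw [Subtype.ext_iff, ← Fin.cons_self_tail a.1, ← Fin.cons_self_tail a'.1, hhead, htail]

theorem exists_hasSum_prod_pow_le {z : ℕ → ℝ} (hz : ∀ i, 0 ≤ z i) (hz0 : z 0 < 1) (n w : ℕ)
    (hlt : ∀ j < w, ∏ i ∈ range (j + 1), z (i + 1) < 1) :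
    ∃ s, HasSum (fun a : {a : Fin (w + 1) → ℕ // StrictAnti a ∧ (∀ i, 0 < a i) ∧ n < a 0} =>
        ∏ i : Fin (w + 1), z i ^ a.1 i) s ∧
      s ≤ z 0 ^ (n + 1) / (1 - z 0) * ∏ j ∈ range w,
        (∏ i ∈ range (j + 1), z (i + 1)) / (1 - ∏ i ∈ range (j + 1), z (i + 1)) := by
  have hhead := hasSum_pow_Ioi ((Real.norm_of_nonneg (hz 0)).trans_lt hz0) n
  have htail := hasSum_prod_pow (z := fun i => z (i + 1)) (fun i => hz (i + 1)) w hlt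
  have hhead_nonneg (k : Set.Ioi n) : 0 ≤ z 0 ^ (k : ℕ) := pow_nonneg (hz 0) _
  have htail_nonneg (a : DecreasingTuple w) : 0 ≤ ∏ i : Fin w, z (i + 1) ^ a.1 i :=
    prod_nonneg fun i _ => pow_nonneg (hz _) _
  have hpair := hasSum_mul_of_nonneg hhead htail hhead_nonneg htail_nonneg
  have hsplit (a : {a : Fin (w + 1) → ℕ // StrictAnti a ∧ (∀ i, 0 < a i) ∧ n < a 0}) :
      ∏ i : Fin (w + 1), z i ^ a.1 i =
        z 0 ^ ((headTail a).1 : ℕ) * ∏ i : Fin w, z (i + 1) ^ (headTail a).2.1 i := by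
    simp [headTail, Fin.prod_univ_succ, Fin.tail]
  simp only [hsplit]
  refine ⟨_, (hpair.summable.comp_injective headTail_injective).hasSum, ?_⟩
  rw [← hpair.tsum_eq]
  exact tsum_comp_le_tsum_of_inj hpair.summable
    (fun p => mul_nonneg (hhead_nonneg p.1) (htail_nonneg p.2)) headTail_injective

end DecreasingTuple

/-- The weights for which `∏ i, initialWeight r c i ^ a i` is `r` to the power of the sum of the
first `c` entries of `a`. -/
def initialWeight {M : Type*} [One M] (r : M) (c i : ℕ) : M := if i < c then r else 1

lemma initialWeight_succ_succ {M : Type*} [One M] (r : M) (c i : ℕ) :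
    initialWeight r (c + 1) (i + 1) = initialWeight r c i := by
  simp [initialWeight]

lemma initialWeight_nonneg {r : ℝ} (hr : 0 ≤ r) (c i : ℕ) : 0 ≤ initialWeight r c i := by
  unfold initialWeight
  split_ifs
  exacts [hr, zero_le_one]

section initialWeight

variable {M : Type*} [CommMonoid M] (r : M) (c : ℕ)

lemma prod_range_initialWeight (m : ℕ) : ∏ i ∈ range m, initialWeight r c i = r ^ min m c := by
  have hfilter : {i ∈ range m | i < c} = range (min m c) := by ext; simp
  simp only [initialWeight, ← prod_filter, hfilter, prod_const, card_range]

lemma prod_initialWeight_pow {v : ℕ} (a : Fin v → ℕ) :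
    ∏ i : Fin v, initialWeight r c i ^ a i = r ^ ∑ i : Fin v with i.1 < c, a i := by
  simp only [initialWeight, ite_pow, one_pow, ← prod_filter, prod_pow_eq_pow_sum]

end initialWeight

lemma rpow_neg_sum_eq_prod_initialWeight {b : ℝ} (hb : 0 ≤ b) (c : ℕ) {v : ℕ} (a : Fin v → ℕ) :
    b ^ (-(∑ i : Fin v with i.1 < c, (a i : ℝ))) =
      ∏ i : Fin v, initialWeight b⁻¹ c i ^ a i := by
  rw [prod_initialWeight_pow, inv_pow, Real.rpow_neg hb, ← Nat.cast_sum, Real.rpow_natCast]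

lemma prod_range_min {M : Type*} [CommMonoid M] (f : ℕ → M) {c w : ℕ} (hcw : c ≤ w) :
    ∏ j ∈ range w, f (min (j + 1) c) = (∏ i ∈ Icc 1 c, f i) * f c ^ (w - c) := by
  obtain ⟨d, rfl⟩ := Nat.exists_eq_add_of_le hcw
  have hlow : ∏ j ∈ range c, f (min (j + 1) c) = ∏ i ∈ Icc 1 c, f i := by
    rw [← Ico_add_one_right_eq_Icc, prod_Ico_eq_prod_range, Nat.add_sub_cancel]
    refine prod_congr rfl fun j hj => ?_
    rw [min_eq_left (Nat.succ_le_of_lt (mem_range.1 hj)), add_comm]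
  have hhigh (j : ℕ) : min (c + j + 1) c = c := by omega
  simp only [prod_range_add, hlow, hhigh, prod_const, card_range, Nat.add_sub_cancel_left]

lemma inv_pow_succ_div_one_sub_inv {K : Type*} [Field K] {x : K} (hx : x ≠ 0) (n : ℕ) :
    x⁻¹ ^ (n + 1) / (1 - x⁻¹) = 1 / (x ^ n * (x - 1)) := by
  have hsub : 1 - x⁻¹ = x⁻¹ * (x - 1) := by rw [mul_sub, inv_mul_cancel₀ hx, mul_one]
  rw [hsub, pow_succ', mul_div_mul_left _ _ (inv_ne_zero hx), inv_pow, inv_eq_one_div, div_div]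

theorem decreasing_tuple_partial_sum_bound_general {b : ℝ} (hb : 1 < b) {α v : ℕ} (n : ℕ)
    (hα : 2 ≤ α) (hv : 0 < v) (hαv : α ≤ v) :
    ∃ s, HasSum (fun t : {a : Fin v → ℕ // StrictAnti a ∧ (∀ i, 0 < a i) ∧ n < a ⟨0, hv⟩} =>
        b ^ (-(∑ i : Fin v with i.1 < α, (t.1 i : ℝ)))) s ∧
      s ≤ 1 / (b ^ n * (b - 1)) * (∏ i ∈ Icc 1 (α - 1), 1 / (b ^ i - 1)) *
        (1 / (b ^ (α - 1) - 1)) ^ (v - α) := by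
  obtain ⟨c, rfl⟩ := Nat.exists_eq_add_one_of_ne_zero (show α ≠ 0 by omega)
  obtain ⟨w, rfl⟩ := Nat.exists_eq_add_one_of_ne_zero hv.ne'
  have hb0 : 0 < b := one_pos.trans hb
  have hpartial (j : ℕ) : ∏ i ∈ range (j + 1), initialWeight b⁻¹ (c + 1) (i + 1) =
      b⁻¹ ^ min (j + 1) c := by
    simp only [initialWeight_succ_succ, prod_range_initialWeight]
  have hfactor (m : ℕ) : b⁻¹ ^ m / (1 - b⁻¹ ^ m) = 1 / (b ^ m - 1) := by
    simpa using inv_pow_succ_div_one_sub_inv (pow_ne_zero m hb0.ne') 0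
  obtain ⟨s, hs, hle⟩ := DecreasingTuple.exists_hasSum_prod_pow_le
    (initialWeight_nonneg (inv_nonneg.2 hb0.le) (c + 1))
    (by simpa [initialWeight] using inv_lt_one_of_one_lt₀ hb) n w fun j _ => by
      rw [hpartial]
      exact pow_lt_one₀ (by positivity) (inv_lt_one_of_one_lt₀ hb) (by omega)
  simp only [hpartial, hfactor] at hle
  rw [prod_range_min (fun m => 1 / (b ^ m - 1)) (by omega), ← mul_assoc,
    show initialWeight b⁻¹ (c + 1) 0 = b⁻¹ from if_pos c.succ_pos,
    inv_pow_succ_div_one_sub_inv hb0.ne'] at hle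
  refine ⟨s, by simpa only [rpow_neg_sum_eq_prod_initialWeight hb0.le] using! hs, ?_⟩
  simpa only [Nat.add_sub_cancel, Nat.add_sub_add_right] using! hle

/-- For an integer `b ≥ 2` and `α, v, n ∈ ℕ` with `2 ≤ α ≤ v`, the sum
of `b^{-(a_1+⋯+a_α)}` over all strictly decreasing tuples `a_1 > a_2 > ⋯ > a_v > 0` of
positive integers with `a_1 > n` (only the `α` largest entries appear in the exponent) is
at most `(1/(b^n(b-1))) (∏_{i=1}^{α-1} 1/(b^i-1)) (1/(b^{α-1}-1))^{v-α}`. -/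
theorem decreasing_tuple_partial_sum_bound (b α v n : ℕ) (hb : 2 ≤ b) (hα : 2 ≤ α)
    (hv : 0 < v) (hαv : α ≤ v) (hn : 0 < n) :
    (∑' t : {a : Fin v → ℕ // StrictAnti a ∧ (∀ i, 0 < a i) ∧ n < a ⟨0, hv⟩},
        (b : ℝ) ^ (-(∑ i ∈ Finset.univ.filter fun i : Fin v => i.1 < α, (t.1 i : ℝ)))) ≤
      1 / ((b : ℝ) ^ n * ((b : ℝ) - 1)) *
        (∏ i ∈ Finset.Icc 1 (α - 1), 1 / ((b : ℝ) ^ i - 1)) *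
        (1 / ((b : ℝ) ^ (α - 1) - 1)) ^ (v - α) := by
  obtain ⟨s, hs, hle⟩ :=
    decreasing_tuple_partial_sum_bound_general (Nat.one_lt_cast.2 hb) n hα hv hαv
  exact hs.tsum_eq.trans_le hle
end
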